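/- Consider m = 2 products and the value distribution with f(5, 4) = 1/2 and f(9, 10) = 1/2. Then the optimal welfare equals E[max(v1, v2)] = 15/2, no IC-IR mechanism with finite signal space has revenue equal to 15/2 (full surplus extraction is impossible), and there exists an IC-IR mechanism with revenue 7, namely the no-information mechanism with a single signal that sells product 2 at price 7 (x = (0, 1), p = 7, which is IR since the posterior mean of product 2 is 7). -/

import Mathlib

open Finset

noncomputable section

namespace Screening

variable {m : ℕ} {ι : Type}

/-- The ex-ante probability of signal `s` under information structure `σ`. -/
def sigR (V : Finset (Fin m → ℝ)) (f : (Fin m → ℝ) → ℝ)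
    (σ : (Fin m → ℝ) → ι → ℝ) (s : ι) : ℝ :=
  ∑ v ∈ V, f v * σ v s

/-- The posterior mean value of product `i` upon receiving signal `s`. -/
def post (V : Finset (Fin m → ℝ)) (f : (Fin m → ℝ) → ℝ)
    (σ : (Fin m → ℝ) → ι → ℝ) (s : ι) (i : Fin m) : ℝ :=
  (∑ v ∈ V, f v * σ v s * v i) / sigR V f σ s

/-- `σ` is an information structure with finite signal space `S`. -/
def IsInfo (V : Finset (Fin m → ℝ)) (S : Finset ι)
    (σ : (Fin m → ℝ) → ι → ℝ) : Prop :=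
  ∀ v ∈ V, (∀ s, 0 ≤ σ v s) ∧ (∀ s, s ∉ S → σ v s = 0) ∧ (∑ s ∈ S, σ v s = 1)

/-- `x` is a feasible (random, unit-demand) allocation rule on `S`. -/
def IsAlloc (S : Finset ι) (x : ι → Fin m → ℝ) : Prop :=
  ∀ s ∈ S, (∀ i, 0 ≤ x s i) ∧ (∀ i, x s i ≤ 1) ∧ (∑ i, x s i ≤ 1)

/-- Incentive compatibility. -/
def IC (V : Finset (Fin m → ℝ)) (f : (Fin m → ℝ) → ℝ) (S : Finset ι)
    (σ : (Fin m → ℝ) → ι → ℝ) (x : ι → Fin m → ℝ) (p : ι → ℝ) : Prop :=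
  ∀ s ∈ S, 0 < sigR V f σ s → ∀ s' ∈ S,
    (∑ i, post V f σ s i * x s' i) - p s' ≤ (∑ i, post V f σ s i * x s i) - p s

/-- Individual rationality. -/
def IR (V : Finset (Fin m → ℝ)) (f : (Fin m → ℝ) → ℝ) (S : Finset ι)
    (σ : (Fin m → ℝ) → ι → ℝ) (x : ι → Fin m → ℝ) (p : ι → ℝ) : Prop :=
  ∀ s ∈ S, 0 < sigR V f σ s → 0 ≤ (∑ i, post V f σ s i * x s i) - p s

/-- Expected revenue of a mechanism. -/
def Rev (V : Finset (Fin m → ℝ)) (f : (Fin m → ℝ) → ℝ) (S : Finset ι)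
    (σ : (Fin m → ℝ) → ι → ℝ) (p : ι → ℝ) : ℝ :=
  ∑ s ∈ S, sigR V f σ s * p s

/-- Nonemptiness of `Fin m` as a finset, given `0 < m`. -/
lemma univNe (hm : 0 < m) : (univ : Finset (Fin m)).Nonempty :=
  univ_nonempty_iff.mpr (Fin.pos_iff_nonempty.mp hm)

/-- The maximum value `max_i v_i`. -/
def vmax (hm : 0 < m) (v : Fin m → ℝ) : ℝ :=
  univ.sup' (univNe hm) v

/-- The smallest-index maximizing coordinate of `v`. -/
def istar (hm : 0 < m) (v : Fin m → ℝ) : Fin m :=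
  (univ.filter (fun i => ∀ j, v j ≤ v i)).min' (by
    obtain ⟨i, -, hi⟩ := Finset.exists_max_image (univ : Finset (Fin m)) v (univNe hm)
    exact ⟨i, mem_filter.mpr ⟨mem_univ _, fun j => hi j (mem_univ _)⟩⟩)

/-- The probability that product `i` is the (selected) highest-value product. -/
def probTop (V : Finset (Fin m → ℝ)) (f : (Fin m → ℝ) → ℝ)
    (top : (Fin m → ℝ) → Fin m) (i : Fin m) : ℝ :=
  ∑ v ∈ V.filter (fun v => top v = i), f v

/-- The posterior mean value of product `j` conditional on `i` being the highest-value
product (i.e. conditional on the horizontal-disclosure signal `i`). -/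
def condMean (V : Finset (Fin m → ℝ)) (f : (Fin m → ℝ) → ℝ)
    (top : (Fin m → ℝ) → Fin m) (i j : Fin m) : ℝ :=
  (∑ v ∈ V.filter (fun v => top v = i), f v * v j) / probTop V f top i


/-- The first type `(5, 4)`. -/
def u1 : Fin 2 → ℝ := ![5, 4]

/-- The second type `(9, 10)`. -/
def u2 : Fin 2 → ℝ := ![9, 10]

/-- The support of the two-product instance. -/
def V2 : Finset (Fin 2 → ℝ) := {u1, u2}

/-- The distribution: each type with probability 1/2. -/
def f2 : (Fin 2 → ℝ) → ℝ := fun v => if v = u1 then 1 / 2 else if v = u2 then 1 / 2 else 0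

/-- The no-information structure with a single signal. -/
def σNoInfo : (Fin 2 → ℝ) → Unit → ℝ := fun _ _ => 1

/-!
A seller extracts the full surplus only if every signal sells its recipients their favourite
product at its posterior mean. If each type has a unique favourite, each signal therefore pools
only types with a common favourite and sells that product for sure; incentive compatibility then
says that a signal selling product `j` carries a posterior mean for product `i` no larger than
that of any signal selling `i`. Averaging over signals, the mean of `v i` given that `j` is the
favourite is at most its mean given that `i` is. In the instance these means for product `0` are
`9` and `5`.
-/

/-- `top v` is the strictly most valued product of every type `v ∈ V`, and has positive value, so
that the only surplus-maximizing allocation to `v` is `top v` with certainty. -/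
def IsUniqueTop (V : Finset (Fin m → ℝ)) (top : (Fin m → ℝ) → Fin m) : Prop :=
  ∀ v ∈ V, 0 < v (top v) ∧ ∀ j, j ≠ top v → v j < v (top v)

/-- Every signal of `S` reveals the favourite product `top v` of the types `v ∈ V` that receive it
with positive probability. -/
def RevealsTop (V : Finset (Fin m → ℝ)) (f : (Fin m → ℝ) → ℝ) (S : Finset ι)
    (σ : (Fin m → ℝ) → ι → ℝ) (top : (Fin m → ℝ) → Fin m) : Prop :=
  ∀ s ∈ S, ∀ v ∈ V, ∀ w ∈ V, f v * σ v s ≠ 0 → f w * σ w s ≠ 0 → top v = top w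

open Classical in
/-- The signals of `S` received with positive probability by a type whose favourite product
is `i`. -/
def topSignals (V : Finset (Fin m → ℝ)) (f : (Fin m → ℝ) → ℝ) (S : Finset ι)
    (σ : (Fin m → ℝ) → ι → ℝ) (top : (Fin m → ℝ) → Fin m) (i : Fin m) : Finset ι :=
  {s ∈ S | ∃ v ∈ V, top v = i ∧ f v * σ v s ≠ 0}

/-- An individually rational mechanism whose revenue is the whole surplus, for a nonnegative prior
under which each type has a unique favourite product. Incentive compatibility is kept separate. -/
structure ExtractsFullSurplus (V : Finset (Fin m → ℝ)) (f : (Fin m → ℝ) → ℝ) (S : Finset ι)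
    (σ : (Fin m → ℝ) → ι → ℝ) (x : ι → Fin m → ℝ) (p : ι → ℝ)
    (top : (Fin m → ℝ) → Fin m) : Prop where
  prior_nonneg : ∀ v ∈ V, 0 ≤ f v
  isUniqueTop : IsUniqueTop V top
  isInfo : IsInfo V S σ
  isAlloc : IsAlloc S x
  isIR : IR V f S σ x p
  rev_eq : Rev V f S σ p = ∑ v ∈ V, f v * v (top v)

section Allocation

variable {v y : Fin m → ℝ} {i : Fin m}

lemma le_of_forall_ne_lt (hi : ∀ j, j ≠ i → v j < v i) (j : Fin m) : v j ≤ v i := by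
  rcases eq_or_ne j i with rfl | hj
  exacts [le_rfl, (hi j hj).le]

lemma sub_sum_mul_eq (v y : Fin m → ℝ) (i : Fin m) :
    v i - ∑ j, v j * y j = v i * (1 - ∑ j, y j) + ∑ j, (v i - v j) * y j := by
  simp only [sub_mul, sum_sub_distrib, ← mul_sum]
  ring

lemma sum_mul_le_of_forall_le (hi : 0 ≤ v i) (hmax : ∀ j, v j ≤ v i) (hy : ∀ j, 0 ≤ y j)
    (hsum : ∑ j, y j ≤ 1) : ∑ j, v j * y j ≤ v i := by
  have hslack : 0 ≤ v i * (1 - ∑ j, y j) := mul_nonneg hi (sub_nonneg.2 hsum)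
  have hregret : 0 ≤ ∑ j, (v i - v j) * y j :=
    sum_nonneg fun j _ => mul_nonneg (sub_nonneg.2 (hmax j)) (hy j)
  linarith [sub_sum_mul_eq v y i]

lemma eq_single_of_sum_mul_eq (hi : 0 < v i) (hmax : ∀ j, j ≠ i → v j < v i)
    (hy : ∀ j, 0 ≤ y j) (hsum : ∑ j, y j ≤ 1) (heq : ∑ j, v j * y j = v i) :
    y = Pi.single i 1 := by
  have hregret_nonneg : ∀ j ∈ univ, 0 ≤ (v i - v j) * y j :=
    fun j _ => mul_nonneg (sub_nonneg.2 (le_of_forall_ne_lt hmax j)) (hy j)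
  have hslack_nonneg : 0 ≤ v i * (1 - ∑ j, y j) := mul_nonneg hi.le (sub_nonneg.2 hsum)
  have hregret : ∑ j, (v i - v j) * y j = 0 := by
    linarith [sub_sum_mul_eq v y i, sum_nonneg hregret_nonneg]
  have hslack : v i * (1 - ∑ j, y j) = 0 := by
    linarith [sub_sum_mul_eq v y i]
  have hzero (j : Fin m) (hj : j ≠ i) : y j = 0 := by
    have hterm := (sum_eq_zero_iff_of_nonneg hregret_nonneg).1 hregret j (mem_univ j)
    exact (mul_eq_zero.1 hterm).resolve_left (sub_pos.2 (hmax j hj)).ne'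
  have hone : y i = 1 := by
    rw [← sum_eq_single_of_mem i (mem_univ i) fun j _ hj => hzero j hj]
    linarith [(mul_eq_zero.1 hslack).resolve_left hi.ne']
  ext j
  rcases eq_or_ne j i with rfl | hj
  · rw [hone, Pi.single_eq_same]
  · rw [hzero j hj, Pi.single_eq_of_ne hj]

lemma le_istar (hm : 0 < m) (v : Fin m → ℝ) (j : Fin m) : v j ≤ v (istar hm v) := by
  have hmem : istar hm v ∈ univ.filter fun i => ∀ j, v j ≤ v i := min'_mem _ _
  exact (mem_filter.1 hmem).2 j

lemma istar_eq_of_forall_lt (hm : 0 < m) (hi : ∀ j, j ≠ i → v j < v i) : istar hm v = i := by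
  by_contra hne
  exact (le_istar hm v i).not_gt (hi _ hne)

end Allocation

section Mechanism

variable {V : Finset (Fin m → ℝ)} {f : (Fin m → ℝ) → ℝ} {S : Finset ι}
  {σ : (Fin m → ℝ) → ι → ℝ} {x : ι → Fin m → ℝ} {p : ι → ℝ}
  {top : (Fin m → ℝ) → Fin m} {s t : ι} {i j : Fin m}

lemma joint_nonneg (hf : ∀ v ∈ V, 0 ≤ f v) (hσ : IsInfo V S σ) (s : ι) :
    ∀ v ∈ V, 0 ≤ f v * σ v s :=
  fun v hv => mul_nonneg (hf v hv) ((hσ v hv).1 s)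

lemma sigR_nonneg (hf : ∀ v ∈ V, 0 ≤ f v) (hσ : IsInfo V S σ) (s : ι) : 0 ≤ sigR V f σ s :=
  sum_nonneg (joint_nonneg hf hσ s)

lemma sigR_pos (hf : ∀ v ∈ V, 0 ≤ f v) (hσ : IsInfo V S σ) {v : Fin m → ℝ} (hv : v ∈ V)
    (hvs : f v * σ v s ≠ 0) : 0 < sigR V f σ s :=
  sum_pos' (joint_nonneg hf hσ s) ⟨v, hv, (joint_nonneg hf hσ s v hv).lt_of_ne' hvs⟩

lemma sigR_mul_post (hf : ∀ v ∈ V, 0 ≤ f v) (hσ : IsInfo V S σ) (s : ι) (i : Fin m) :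
    sigR V f σ s * post V f σ s i = ∑ v ∈ V, f v * σ v s * v i := by
  refine mul_div_cancel_of_imp' fun hzero => sum_eq_zero fun v hv => ?_
  rw [(sum_eq_zero_iff_of_nonneg (joint_nonneg hf hσ s)).1 hzero v hv, zero_mul]

lemma sigR_mul_sum_post_mul (hf : ∀ v ∈ V, 0 ≤ f v) (hσ : IsInfo V S σ) (s : ι)
    (y : Fin m → ℝ) :
    sigR V f σ s * ∑ i, post V f σ s i * y i = ∑ v ∈ V, f v * σ v s * ∑ i, v i * y i := by
  simp only [mul_sum, ← mul_assoc, sigR_mul_post hf hσ, sum_mul]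
  exact sum_comm

lemma sum_sum_joint_mul (hσ : IsInfo V S σ) (g : (Fin m → ℝ) → ℝ) :
    ∑ s ∈ S, ∑ v ∈ V, f v * σ v s * g v = ∑ v ∈ V, f v * g v := by
  rw [sum_comm]
  refine sum_congr rfl fun v hv => ?_
  rw [← sum_mul, ← mul_sum, (hσ v hv).2.2, mul_one]

lemma sigR_mul_price_le (hf : ∀ v ∈ V, 0 ≤ f v) (hσ : IsInfo V S σ) (hIR : IR V f S σ x p)
    (hs : s ∈ S) : sigR V f σ s * p s ≤ ∑ v ∈ V, f v * σ v s * ∑ i, v i * x s i := by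
  rw [← sigR_mul_sum_post_mul hf hσ]
  rcases (sigR_nonneg hf hσ s).eq_or_lt with hzero | hpos
  · simp only [← hzero, zero_mul, le_refl]
  · exact mul_le_mul_of_nonneg_left (sub_nonneg.1 (hIR s hs hpos)) hpos.le

lemma joint_mul_value_le (hf : ∀ v ∈ V, 0 ≤ f v) (htop : IsUniqueTop V top)
    (hσ : IsInfo V S σ) (hx : IsAlloc S x) (hs : s ∈ S) :
    ∀ v ∈ V, f v * σ v s * ∑ i, v i * x s i ≤ f v * σ v s * v (top v) :=
  fun v hv => mul_le_mul_of_nonneg_left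
    (sum_mul_le_of_forall_le (htop v hv).1.le (le_of_forall_ne_lt (htop v hv).2)
      (hx s hs).1 (hx s hs).2.2)
    (joint_nonneg hf hσ s v hv)

lemma sum_topSignals_joint_mul (hσ : IsInfo V S σ) (hreveal : RevealsTop V f S σ top)
    (i : Fin m) (g : (Fin m → ℝ) → ℝ) :
    ∑ s ∈ topSignals V f S σ top i, ∑ v ∈ V, f v * σ v s * g v =
      ∑ v ∈ V.filter (fun v => top v = i), f v * g v := by
  classical
  have hinfo : IsInfo (V.filter fun v => top v = i) S σ :=
    fun v hv => hσ v (mem_of_mem_filter v hv)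
  rw [← sum_sum_joint_mul hinfo g, topSignals, sum_filter]
  refine sum_congr rfl fun s hs => ?_
  split_ifs with hsi
  · obtain ⟨v, hv, hvi, hvs⟩ := hsi
    refine (sum_filter_of_ne fun w hw hne => ?_).symm
    rw [← hvi]
    exact hreveal s hs w hw v hv (left_ne_zero_of_mul hne) hvs
  · refine (sum_eq_zero fun v hv => ?_).symm
    obtain ⟨hvV, hvi⟩ := mem_filter.1 hv
    have hzero : f v * σ v s = 0 := by
      by_contra hne
      exact hsi ⟨v, hvV, hvi, hne⟩
    rw [hzero, zero_mul]

lemma sum_topSignals_sigR (hσ : IsInfo V S σ) (hreveal : RevealsTop V f S σ top) (i : Fin m) :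
    ∑ s ∈ topSignals V f S σ top i, sigR V f σ s = probTop V f top i := by
  simpa only [sigR, probTop, mul_one] using sum_topSignals_joint_mul hσ hreveal i fun _ => 1

lemma condMean_eq_centerMass (hf : ∀ v ∈ V, 0 ≤ f v) (hσ : IsInfo V S σ)
    (hreveal : RevealsTop V f S σ top) (i j : Fin m) :
    condMean V f top i j =
      (topSignals V f S σ top i).centerMass (sigR V f σ) fun s => post V f σ s j := by
  simp only [centerMass, smul_eq_mul, sigR_mul_post hf hσ, sum_topSignals_sigR hσ hreveal,
    sum_topSignals_joint_mul hσ hreveal i fun v => v j, condMean]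
  exact div_eq_inv_mul _ _

lemma condMean_mem_of_forall_post_mem (hf : ∀ v ∈ V, 0 ≤ f v) (hσ : IsInfo V S σ)
    (hreveal : RevealsTop V f S σ top) (hi : 0 < probTop V f top i) {K : Set ℝ}
    (hK : Convex ℝ K) (hpost : ∀ s ∈ topSignals V f S σ top i, post V f σ s j ∈ K) :
    condMean V f top i j ∈ K := by
  rw [condMean_eq_centerMass hf hσ hreveal]
  exact hK.centerMass_mem (fun s _ => sigR_nonneg hf hσ s)
    (hi.trans_eq (sum_topSignals_sigR hσ hreveal i).symm) hpost

namespace ExtractsFullSurplus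

lemma sigR_mul_price_eq (h : ExtractsFullSurplus V f S σ x p top) (hs : s ∈ S) :
    sigR V f σ s * p s = ∑ v ∈ V, f v * σ v s * v (top v) := by
  have hle (s) (hs : s ∈ S) : sigR V f σ s * p s ≤ ∑ v ∈ V, f v * σ v s * v (top v) :=
    (sigR_mul_price_le h.prior_nonneg h.isInfo h.isIR hs).trans
      (sum_le_sum (joint_mul_value_le h.prior_nonneg h.isUniqueTop h.isInfo h.isAlloc hs))
  exact (sum_eq_sum_iff_of_le hle).1
    (h.rev_eq.trans (sum_sum_joint_mul h.isInfo fun v => v (top v)).symm) s hs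

lemma alloc_eq_single (h : ExtractsFullSurplus V f S σ x p top) (hs : s ∈ S)
    {v : Fin m → ℝ} (hv : v ∈ V) (hvs : f v * σ v s ≠ 0) : x s = Pi.single (top v) 1 := by
  have hle := joint_mul_value_le h.prior_nonneg h.isUniqueTop h.isInfo h.isAlloc hs
  have hsum : ∑ v ∈ V, f v * σ v s * ∑ i, v i * x s i = ∑ v ∈ V, f v * σ v s * v (top v) :=
    (sum_le_sum hle).antisymm <|
      (h.sigR_mul_price_eq hs).symm.trans_le (sigR_mul_price_le h.prior_nonneg h.isInfo h.isIR hs)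
  have hvalue : ∑ i, v i * x s i = v (top v) :=
    mul_left_cancel₀ hvs ((sum_eq_sum_iff_of_le hle).1 hsum v hv)
  obtain ⟨hpos, hmax⟩ := h.isUniqueTop v hv
  obtain ⟨hnonneg, -, hsum_le⟩ := h.isAlloc s hs
  exact eq_single_of_sum_mul_eq hpos hmax hnonneg hsum_le hvalue

lemma revealsTop (h : ExtractsFullSurplus V f S σ x p top) :
    RevealsTop V f S σ top := by
  intro s hs v hv w hw hvs hws
  have hsingle : (Pi.single (top v) 1 : Fin m → ℝ) = Pi.single (top w) 1 :=
    (h.alloc_eq_single hs hv hvs).symm.trans (h.alloc_eq_single hs hw hws)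
  by_contra hne
  simpa [Pi.single_eq_of_ne hne] using congrFun hsingle (top v)

lemma price_eq (h : ExtractsFullSurplus V f S σ x p top) (hs : s ∈ S)
    (hpos : 0 < sigR V f σ s) : p s = ∑ i, post V f σ s i * x s i := by
  refine (sub_nonneg.1 (h.isIR s hs hpos)).antisymm (le_of_mul_le_mul_left ?_ hpos)
  rw [sigR_mul_sum_post_mul h.prior_nonneg h.isInfo, h.sigR_mul_price_eq hs]
  exact sum_le_sum (joint_mul_value_le h.prior_nonneg h.isUniqueTop h.isInfo h.isAlloc hs)

lemma post_le_post (h : ExtractsFullSurplus V f S σ x p top) (hIC : IC V f S σ x p)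
    (hs : s ∈ topSignals V f S σ top i) (ht : t ∈ topSignals V f S σ top j) :
    post V f σ t i ≤ post V f σ s i := by
  obtain ⟨hsS, v, hv, rfl, hvs⟩ := mem_filter.1 hs
  obtain ⟨htS, w, hw, -, hwt⟩ := mem_filter.1 ht
  have hpos_s : 0 < sigR V f σ s := sigR_pos h.prior_nonneg h.isInfo hv hvs
  have hpos_t : 0 < sigR V f σ t := sigR_pos h.prior_nonneg h.isInfo hw hwt
  have hdeviate : ∑ k, post V f σ t k * x s k ≤ ∑ k, post V f σ s k * x s k := by
    have hIC_ts := hIC t htS hpos_t s hsS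
    rwa [← h.price_eq htS hpos_t, sub_self, sub_nonpos, h.price_eq hsS hpos_s] at hIC_ts
  simpa [h.alloc_eq_single hsS hv hvs, Pi.single_apply] using hdeviate

theorem condMean_le_condMean (h : ExtractsFullSurplus V f S σ x p top)
    (hIC : IC V f S σ x p) (hi : 0 < probTop V f top i) (hj : 0 < probTop V f top j) :
    condMean V f top j i ≤ condMean V f top i i := by
  refine condMean_mem_of_forall_post_mem h.prior_nonneg h.isInfo h.revealsTop hi (convex_Ici _)
    fun s hs => ?_
  exact condMean_mem_of_forall_post_mem h.prior_nonneg h.isInfo h.revealsTop hj (convex_Iic _)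
    fun t ht => h.post_le_post hIC hs ht

end ExtractsFullSurplus

lemma condMean_of_filter_eq_singleton {v : Fin m → ℝ}
    (hfilter : V.filter (fun v => top v = i) = {v}) (hv : f v ≠ 0) (j : Fin m) :
    condMean V f top i j = v j := by
  rw [condMean, probTop, hfilter, sum_singleton, sum_singleton, mul_div_cancel_left₀ _ hv]

end Mechanism

section Instance

lemma u1_ne_u2 : u1 ≠ u2 := fun h => by
  simpa [u1, u2] using congrFun h 0

lemma f2_u1 : f2 u1 = 1 / 2 := if_pos rfl

lemma f2_u2 : f2 u2 = 1 / 2 := (if_neg u1_ne_u2.symm).trans (if_pos rfl)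

lemma f2_nonneg (v : Fin 2 → ℝ) : 0 ≤ f2 v := by
  unfold f2
  positivity

lemma sum_V2 (g : (Fin 2 → ℝ) → ℝ) : ∑ v ∈ V2, f2 v * g v = (g u1 + g u2) / 2 := by
  rw [V2, sum_pair u1_ne_u2, f2_u1, f2_u2]
  ring

lemma istar_u1 : istar two_pos u1 = 0 :=
  istar_eq_of_forall_lt two_pos (by norm_num [Fin.forall_fin_two, u1])

lemma istar_u2 : istar two_pos u2 = 1 :=
  istar_eq_of_forall_lt two_pos (by norm_num [Fin.forall_fin_two, u2])

lemma isUniqueTop_V2 : IsUniqueTop V2 (istar two_pos) := by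
  simp only [IsUniqueTop, V2, mem_insert, mem_singleton, forall_eq_or_imp, forall_eq, istar_u1,
    istar_u2]
  norm_num [Fin.forall_fin_two, u1, u2]

lemma filter_istar_eq_zero : V2.filter (fun v => istar two_pos v = 0) = {u1} := by
  simp [V2, filter_insert, filter_singleton, istar_u1, istar_u2]

lemma filter_istar_eq_one : V2.filter (fun v => istar two_pos v = 1) = {u2} := by
  simp [V2, filter_insert, filter_singleton, istar_u1, istar_u2]

lemma sum_V2_istar : ∑ v ∈ V2, f2 v * v (istar two_pos v) = 15 / 2 := by
  rw [sum_V2 fun v => v (istar two_pos v), istar_u1, istar_u2]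
  norm_num [u1, u2]

lemma rev_V2_ne (S : Finset ι) (σ : (Fin 2 → ℝ) → ι → ℝ) (x : ι → Fin 2 → ℝ) (p : ι → ℝ)
    (hσ : IsInfo V2 S σ) (hx : IsAlloc S x) (hIC : IC V2 f2 S σ x p)
    (hIR : IR V2 f2 S σ x p) : Rev V2 f2 S σ p ≠ 15 / 2 := by
  intro hrev
  have hfull : ExtractsFullSurplus V2 f2 S σ x p (istar two_pos) :=
    { prior_nonneg := fun v _ => f2_nonneg v
      isUniqueTop := isUniqueTop_V2
      isInfo := hσ
      isAlloc := hx
      isIR := hIR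
      rev_eq := hrev.trans sum_V2_istar.symm }
  have hle : condMean V2 f2 (istar two_pos) 1 0 ≤ condMean V2 f2 (istar two_pos) 0 0 :=
    hfull.condMean_le_condMean hIC
      (by norm_num [probTop, filter_istar_eq_zero, f2_u1])
      (by norm_num [probTop, filter_istar_eq_one, f2_u2])
  rw [condMean_of_filter_eq_singleton filter_istar_eq_one (by norm_num [f2_u2]),
    condMean_of_filter_eq_singleton filter_istar_eq_zero (by norm_num [f2_u1])] at hle
  norm_num [u1, u2] at hle

lemma sigR_σNoInfo (s : Unit) : sigR V2 f2 σNoInfo s = 1 := by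
  rw [sigR, sum_V2 fun v => σNoInfo v s]
  norm_num [σNoInfo]

lemma post_σNoInfo_one (s : Unit) : post V2 f2 σNoInfo s 1 = 7 := by
  rw [post, sigR_σNoInfo]
  simp only [σNoInfo, mul_one, sum_V2 fun v => v 1]
  norm_num [u1, u2]

end Instance

/-- in the instance `f(5,4) = f(9,10) = 1/2`, the optimal welfare is
`15/2`, no IC-IR mechanism extracts the full surplus, and the no-information mechanism
selling product 2 at price 7 is IC-IR with revenue 7. -/
theorem no_full_surplus_extraction :
    -- the optimal welfare equals 15/2
    (∑ v ∈ V2, f2 v * max (v 0) (v 1) = 15 / 2) ∧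
    -- no IC-IR mechanism with a finite signal space has revenue 15/2
    (∀ (ι : Type) (S : Finset ι) (σ : (Fin 2 → ℝ) → ι → ℝ)
        (x : ι → Fin 2 → ℝ) (q : ι → ℝ),
        IsInfo V2 S σ → IsAlloc S x → IC V2 f2 S σ x q → IR V2 f2 S σ x q →
        Rev V2 f2 S σ q ≠ 15 / 2) ∧
    -- the no-information mechanism selling product 2 at price 7 is IC-IR, revenue 7
    (IsInfo V2 ({()} : Finset Unit) σNoInfo ∧
      IsAlloc ({()} : Finset Unit) (fun _ => ![0, 1]) ∧
      IC V2 f2 ({()} : Finset Unit) σNoInfo (fun _ => ![0, 1]) (fun _ => 7) ∧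
      IR V2 f2 ({()} : Finset Unit) σNoInfo (fun _ => ![0, 1]) (fun _ => 7) ∧
      Rev V2 f2 ({()} : Finset Unit) σNoInfo (fun _ => 7) = 7) := by
  refine ⟨?_, fun _ => rev_V2_ne, ?_, ?_, ?_, ?_, ?_⟩
  · rw [sum_V2 fun v => max (v 0) (v 1)]
    norm_num [u1, u2]
  · intro v _
    simp [σNoInfo]
  · intro s _
    simp [Fin.forall_fin_two]
  · intro s _ _ s' _
    exact le_rfl
  · intro s _ _
    simp [Fin.sum_univ_two, post_σNoInfo_one]
  · simp [Rev, sigR_σNoInfo]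

end Screening
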